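/- arXiv:2203.06733 — 2 statements merged into one kernel-verified Lean document; each statement's English description precedes it below -/
import Mathlib

section
/- Let A ⊆ ℝ^d be polynomially discrete with constants c, h > 0. Then there exists C < ∞ such that the number of points of A in the ball B(0,r) satisfies #(A ∩ B(0,r)) ≤ C r^{d(h+1)} for all r ≥ 1. -/
open MeasureTheory SchwartzMap Metric Set
open scoped Pointwise RealInnerProductSpace ENNReal NNReal

noncomputable section

/-- Euclidean space `ℝ^d`. -/
abbrev Rd (d : ℕ) : Type := EuclideanSpace ℝ (Fin d)

/-- The space `S*(ℝ^d)` of tempered distributions: continuous linear functionals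
on the Schwartz space `S(ℝ^d)`. -/
abbrev TemperedDist (d : ℕ) : Type := SchwartzMap (Rd d) ℂ →L[ℂ] ℂ

/-- The Fourier transform of a tempered distribution: `f̂(φ) = f(φ̂)`. -/
def fourierTD {d : ℕ} (f : TemperedDist d) : TemperedDist d :=
  f.comp (fourierTransformCLM ℂ)

/-- The support of a tempered distribution: `x ∈ supp f` iff for every open
neighbourhood `U` of `x` there is a smooth compactly supported test function
supported in `U` on which `f` does not vanish. -/
def tdSupport {d : ℕ} (f : TemperedDist d) : Set (Rd d) :=
  {x | ∀ U : Set (Rd d), IsOpen U → x ∈ U →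
    ∃ φ : SchwartzMap (Rd d) ℂ, HasCompactSupport (⇑φ) ∧ tsupport (⇑φ) ⊆ U ∧ f φ ≠ 0}

/-- A set is locally finite if its intersection with every ball is finite. -/
def LocFinite {d : ℕ} (A : Set (Rd d)) : Prop :=
  ∀ (x : Rd d) (r : ℝ), (A ∩ Metric.ball x r).Finite

/-- A set is uniformly discrete if distances between distinct points are
bounded below by a positive constant. -/
def UniformlyDiscrete {d : ℕ} (A : Set (Rd d)) : Prop :=
  ∃ η > (0:ℝ), ∀ x ∈ A, ∀ y ∈ A, x ≠ y → η ≤ dist x y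

/-- A set is polynomially discrete (p-discrete) if
`|x - x'| ≥ c min{1, |x|^{-h}}` for distinct points `x, x'` of the set. -/
def PDiscrete {d : ℕ} (A : Set (Rd d)) : Prop :=
  ∃ c > (0:ℝ), ∃ h > (0:ℝ), ∀ x ∈ A, ∀ y ∈ A, x ≠ y →
    c * (if ‖x‖ ≤ 1 then 1 else ‖x‖ ^ (-h)) ≤ dist x y

/-- A set has bounded density if it is locally finite and the number of its
points in balls of radius 1 is uniformly bounded. -/
def BoundedDensity {d : ℕ} (A : Set (Rd d)) : Prop :=
  LocFinite A ∧ ∃ N : ℕ, ∀ x : Rd d, (A ∩ Metric.ball x 1).ncard ≤ N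

/-- A set is relatively dense if it intersects every ball of some fixed radius `R`. -/
def RelDense {d : ℕ} (A : Set (Rd d)) : Prop :=
  ∃ R : ℝ, 0 < R ∧ ∀ x : Rd d, ∃ a ∈ A, dist x a ≤ R

/-- A full-rank lattice in `ℝ^d` is the image of `ℤ^d` under an invertible
linear operator. -/
def IsFullRankLattice {d : ℕ} (L : Set (Rd d)) : Prop :=
  ∃ T : Rd d →ₗ[ℝ] Rd d, Function.Bijective T ∧
    L = T '' {x : Rd d | ∀ i, ∃ n : ℤ, x i = (n : ℝ)}

/-- The multi-indices `k ∈ (ℕ ∪ {0})^d` with `‖k‖ = k₁ + ⋯ + k_d ≤ K`. -/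
def mIdx (d K : ℕ) : Finset (Fin d → ℕ) :=
  (Finset.Iic fun _ => K).filter fun k => (∑ i, k i) ≤ K

/-- Partial derivative in the `i`-th coordinate direction. -/
def pderiv' {d : ℕ} (i : Fin d) (φ : Rd d → ℂ) : Rd d → ℂ :=
  fun x => fderiv ℝ φ x (EuclideanSpace.single i (1:ℝ))

/-- The mixed partial derivative `D^k = ∂^{k₁}_{x₁} ⋯ ∂^{k_d}_{x_d}`. -/
def Dmulti {d : ℕ} (k : Fin d → ℕ) : (Rd d → ℂ) → (Rd d → ℂ) :=
  ((List.finRange d).map fun i => (pderiv' i)^[k i]).foldr (· ∘ ·) id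

/-- The action of `D^k δ_λ` on a test function: `φ ↦ (-1)^{‖k‖} (D^k φ)(λ)`. -/
def dkDelta {d : ℕ} (k : Fin d → ℕ) (lam : Rd d) (φ : SchwartzMap (Rd d) ℂ) : ℂ :=
  (-1 : ℂ) ^ (∑ i, k i) * Dmulti k (⇑φ) lam

/-- The exponential `e^{2πi⟨x,w⟩}`. -/
def e2pi {d : ℕ} (x w : Rd d) : ℂ :=
  Complex.exp (((2 * Real.pi : ℝ) : ℂ) * Complex.I * ((⟪x, w⟫ : ℝ) : ℂ))

/-- A trigonometric polynomial: a finite sum `Σ c_ω e^{2πi⟨x,ω⟩}`. -/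
def IsTrigPoly {d : ℕ} (P : Rd d → ℂ) : Prop :=
  ∃ (n : ℕ) (cc : Fin n → ℂ) (w : Fin n → Rd d),
    ∀ x, P x = ∑ i, cc i * e2pi x (w i)

/-- The monomial `x^m = x₁^{m₁} ⋯ x_d^{m_d}` (as a complex number). -/
def monom {d : ℕ} (m : Fin d → ℕ) (x : Rd d) : ℂ := ((∏ i, (x i) ^ (m i) : ℝ) : ℂ)

/-- The total variation of the pure point measure with masses `b` on the open
ball `B(0,r)`: `Σ_{|γ| < r} |b(γ)|` (as an extended nonnegative real). -/
def ballVar {d : ℕ} (b : Rd d → ℂ) (r : ℝ) : ℝ≥0∞ :=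
  ∑' γ : Rd d, if ‖γ‖ < r then (‖b γ‖₊ : ℝ≥0∞) else 0

/-- The pure point measure `μ = Σ_λ a(λ) δ_λ` belongs to `S*(ℝ^d)` and is
represented there by the tempered distribution `f`: its support is countable,
`Σ_λ |a(λ)| |φ(λ)| < ∞` for every Schwartz function `φ`, and the (automatically
continuous) functional `φ ↦ Σ_λ a(λ) φ(λ)` coincides with `f`. -/
def RepMeasure {d : ℕ} (a : Rd d → ℂ) (f : TemperedDist d) : Prop :=
  {x | a x ≠ 0}.Countable ∧
  (∀ φ : SchwartzMap (Rd d) ℂ, Summable fun lam => ‖a lam‖ * ‖φ lam‖) ∧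
  (∀ φ : SchwartzMap (Rd d) ℂ, f φ = ∑' lam, a lam * φ lam)

/-- A continuous function on `ℝ^d` is almost periodic if for every `ε > 0` its
set of `ε`-almost periods is relatively dense. -/
def APFunction {d : ℕ} (g : Rd d → ℂ) : Prop :=
  Continuous g ∧ ∀ ε > (0:ℝ), RelDense {τ : Rd d | ∀ t, ‖g (t + τ) - g t‖ < ε}

/-- A tempered distribution is almost periodic if for every smooth compactly
supported `ψ` the function `t ↦ f(ψ(t - ·))` is almost periodic. -/
def APDistribution {d : ℕ} (f : TemperedDist d) : Prop :=
  ∀ ψ : Rd d → ℂ, ContDiff ℝ (⊤ : ℕ∞) ψ → HasCompactSupport ψ →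
    ∀ Φ : Rd d → SchwartzMap (Rd d) ℂ, (∀ t y, Φ t y = ψ (t - y)) →
      APFunction fun t => f (Φ t)
theorem aux_card {d : ℕ} (s : Finset (Rd d)) (δ r : ℝ) (hδ : 0 < δ) (hr : 0 < r)
    (hs : ∀ x ∈ s, ‖x‖ < r) (hsep : ∀ x ∈ s, ∀ y ∈ s, x ≠ y → δ ≤ dist x y) :
    (s.card : ℝ) ≤ ((r + δ / 2) / (δ / 2)) ^ d := by
  have hδ2 : 0 < δ / 2 := by positivity
  have hR : 0 < r + δ / 2 := by positivity
  have D : Set.Pairwise (s : Set (Rd d)) (Function.onFun Disjoint fun x => ball x (δ / 2)) := by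
    intro x hx y hy hxy
    apply ball_disjoint_ball
    have := hsep x hx y hy hxy
    linarith
  have hsub : (⋃ x ∈ s, ball x (δ / 2)) ⊆ ball (0 : Rd d) (r + δ / 2) := by
    refine iUnion₂_subset fun x hx => ?_
    apply ball_subset_ball'
    have := hs x hx
    rw [dist_zero_right]
    linarith
  have hμ : volume (⋃ x ∈ s, ball x (δ / 2)) ≤ volume (ball (0 : Rd d) (r + δ / 2)) :=
    measure_mono hsub
  rw [measure_biUnion_finset D (fun x _ => measurableSet_ball)] at hμ
  simp only [Measure.addHaar_ball_of_pos (volume : Measure (Rd d)) _ hδ2,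
    Measure.addHaar_ball_of_pos (volume : Measure (Rd d)) _ hR, finrank_euclideanSpace_fin,
    Finset.sum_const, nsmul_eq_mul] at hμ
  rw [← mul_assoc] at hμ
  have hb0 : volume (ball (0 : Rd d) 1) ≠ 0 := (measure_ball_pos _ _ one_pos).ne'
  have hbt : volume (ball (0 : Rd d) 1) ≠ ⊤ := measure_ball_lt_top.ne
  have h2 := (ENNReal.mul_le_mul_iff_left hb0 hbt).1 hμ
  rw [← ENNReal.ofReal_natCast, ← ENNReal.ofReal_mul (by positivity),
    ENNReal.ofReal_le_ofReal_iff (by positivity)] at h2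
  rw [div_pow, le_div_iff₀ (by positivity)]
  exact h2

/-- If `A ⊆ ℝ^d` is polynomially discrete with constants
`c, h > 0`, then there is `C < ∞` such that `#(A ∩ B(0,r)) ≤ C r^{d(h+1)}`
for all `r ≥ 1`. -/
theorem statement2 {d : ℕ} (A : Set (Rd d)) (c h : ℝ) (hc : 0 < c) (hh : 0 < h)
    (hA : ∀ x ∈ A, ∀ y ∈ A, x ≠ y →
      c * (if ‖x‖ ≤ 1 then 1 else ‖x‖ ^ (-h)) ≤ dist x y) :
    ∃ C : ℝ, ∀ r : ℝ, 1 ≤ r →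
      (A ∩ Metric.ball 0 r).Finite ∧
      ((A ∩ Metric.ball 0 r).ncard : ℝ) ≤ C * r ^ ((d : ℝ) * (h + 1)) := by
  refine ⟨((2 + c) / c) ^ d, fun r hr => ?_⟩
  have hr0 : 0 < r := by linarith
  have hrp : 0 < r ^ (-h) := Real.rpow_pos_of_pos hr0 _
  have hr1 : r ^ (-h) ≤ 1 := Real.rpow_le_one_of_one_le_of_nonpos hr (by linarith)
  have hδ : 0 < c * r ^ (-h) := by positivity
  have key : ∀ s : Finset (Rd d), (s : Set (Rd d)) ⊆ A ∩ Metric.ball 0 r →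
      (s.card : ℝ) ≤ ((2 + c) / c) ^ d * r ^ ((d : ℝ) * (h + 1)) := by
    intro s hs
    have h1 := aux_card s (c * r ^ (-h)) r hδ hr0
      (fun x hx => by simpa using (hs hx).2)
      (fun x hx y hy hxy => by
        refine le_trans ?_ (hA x (hs hx).1 y (hs hy).1 hxy)
        have hxr : ‖x‖ < r := by simpa using (hs hx).2
        gcongr
        split_ifs with h1
        · exact hr1
        · push Not at h1
          exact Real.rpow_le_rpow_of_nonpos (by linarith) hxr.le (by linarith))
    refine h1.trans ?_
    rw [mul_comm (d : ℝ), Real.rpow_mul_natCast hr0.le, ← mul_pow]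
    apply pow_le_pow_left₀ (by positivity)
    have e : r ^ (h + 1) * r ^ (-h) = r := by
      rw [← Real.rpow_add hr0]; simp
    rw [div_le_iff₀ (by positivity)]
    have e2 : (2 + c) / c * r ^ (h + 1) * (c * r ^ (-h) / 2)
        = (2 + c) / 2 * (r ^ (h + 1) * r ^ (-h)) := by field_simp
    rw [e2, e]
    nlinarith
  have hfin : (A ∩ Metric.ball 0 r).Finite := by
    by_contra hinf
    obtain ⟨n, hn⟩ := exists_nat_gt (((2 + c) / c) ^ d * r ^ ((d : ℝ) * (h + 1)))
    obtain ⟨t, ht, htc⟩ := Set.Infinite.exists_subset_card_eq hinf n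
    have := key t ht
    rw [htc] at this
    linarith
  refine ⟨hfin, ?_⟩
  rw [Set.ncard_eq_toFinset_card _ hfin]
  exact key _ (by simp)
end
end

section
/- Let μ_1, …, μ_S be purely point measures on ℝ^d belonging to S*(ℝ^d) with uniformly discrete supports Λ_1, …, Λ_S. Suppose that each Fourier transform μ̂_s is a purely point measure satisfying |μ̂_s|(B(0,r)) = O(r^d) as r → ∞, and that inf_{λ ∈ Λ_1 ∪ ⋯ ∪ Λ_S} Σ_{s=1}^S |μ_s(λ)| > 0 (where μ_s(λ) := 0 if λ ∉ Λ_s). Then each Λ_s is contained in a finite union of translates of full-rank lattices. -/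
open MeasureTheory SchwartzMap Metric Set
open scoped Pointwise RealInnerProductSpace ENNReal NNReal

noncomputable section

open Filter Topology in
lemma aux_cov {α : Type*} (A : Set α) (T : Set (Set α))
    (h : ∀ t : Finset (Set α), (t : Set (Set α)) ⊆ T → ¬ A ⊆ ⋃₀ (t : Set (Set α))) :
    ∃ u : Ultrafilter α, A ∈ u ∧ ∀ B ∈ T, B ∉ u := by
  classical
  obtain ⟨u, hu⟩ := Ultrafilter.exists_ultrafilter_of_finite_inter_nonempty
    ({A} ∪ compl '' T) (by
      intro t ht
      have h1 := h ((t.image compl).filter (· ∈ T)) (by intro B hB; simp at hB; exact hB.2)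
      rw [Set.not_subset] at h1
      obtain ⟨x, hxA, hx⟩ := h1
      refine ⟨x, ?_⟩
      intro B hB
      rcases ht hB with h2 | ⟨B', hB', rfl⟩
      · rw [h2]; exact hxA
      · intro hxB
        apply hx
        refine ⟨B', ?_, hxB⟩
        simp only [Finset.coe_filter, Finset.mem_image, mem_ofPred_eq]
        exact ⟨⟨B'ᶜ, hB, compl_compl _⟩, hB'⟩)
  refine ⟨u, hu (Or.inl rfl), fun B hB hBu => ?_⟩
  have : Bᶜ ∈ u := hu (Or.inr ⟨B, hB, rfl⟩)
  exact (Ultrafilter.compl_mem_iff_notMem.mp this) hBu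

open Filter Topology in
lemma aux_wlim {ι 𝓗 : Type*} [NormedAddCommGroup 𝓗] [InnerProductSpace ℂ 𝓗] [CompleteSpace 𝓗]
    (u : Ultrafilter ι) (f : ι → 𝓗) (R : ℝ) (hf : ∀ᶠ i in (u : Filter ι), ‖f i‖ ≤ R) :
    ∃ v : 𝓗, (∀ η, Tendsto (fun t => inner ℂ η (f t)) u (𝓝 (inner ℂ η v))) ∧ ‖v‖ ≤ R := by
  have hc := WeakDual.isCompact_closedBall (𝕜 := ℂ) (0 : StrongDual ℂ 𝓗) R
  let g : ι → WeakDual ℂ 𝓗 := fun i => StrongDual.toWeakDual (InnerProductSpace.toDual ℂ 𝓗 (f i))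
  obtain ⟨w, hw, hle⟩ := hc.ultrafilter_le_nhds' (u.map g) (by
    show ∀ᶠ i in (u : Filter ι), _
    filter_upwards [hf] with i hi
    simpa [g] using hi)
  have hw' : Tendsto g u (𝓝 w) := hle
  refine ⟨(InnerProductSpace.toDual ℂ 𝓗).symm (WeakDual.toStrongDual w), ?_, ?_⟩
  · intro η
    have h1 := ((WeakDual.eval_continuous η).tendsto w).comp hw'
    have h2 := (Complex.continuous_conj.tendsto _).comp h1
    have e : (inner ℂ η ((InnerProductSpace.toDual ℂ 𝓗).symm (WeakDual.toStrongDual w)) : ℂ)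
      = (starRingEnd ℂ) (w η) := by
      rw [← inner_conj_symm, InnerProductSpace.toDual_symm_apply]; rfl
    rw [e]
    refine h2.congr fun i => ?_
    simp [g]
  · simpa using hw

open Filter Topology in
theorem abs_main {Γ : Type} [AddCommGroup Γ] {𝓗 : Type*} [NormedAddCommGroup 𝓗]
    [InnerProductSpace ℂ 𝓗] [CompleteSpace 𝓗] {S : ℕ} (U : Γ → 𝓗 → 𝓗)
    (hadd : ∀ x y η, U (x + y) η = U x (U y η))
    (hadj : ∀ x η η', inner ℂ η (U x η') = inner ℂ (U (-x) η) η')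
    (hn : ∀ x η, ‖U x η‖ = ‖η‖)
    (ξ : 𝓗) (ζ : Fin S → 𝓗) (c : ℝ) (hc : 0 < c)
    (gap : ∀ x, (∃ s, (inner ℂ (ζ s) (U x ξ) : ℂ) ≠ 0) → c ≤ ∑ s, ‖(inner ℂ (ζ s) (U x ξ) : ℂ)‖)
    (hcyc : ∀ v, (∀ x s, (inner ℂ (U x (ζ s)) v : ℂ) = 0) → (inner ℂ ξ v : ℂ) = 0)
    (D : AddSubgroup Γ → Prop)
    (hD : ∀ H : AddSubgroup Γ, (∀ F : Finset Γ, (F : Set Γ) ⊆ H →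
      ∃ t, ∀ x ∈ F, ∃ s, (inner ℂ (ζ s) (U (x + t) ξ) : ℂ) ≠ 0) → D H) :
    ∃ C : Finset (Set Γ), (∀ B ∈ C, ∃ H t, D H ∧ B = {x | x - t ∈ H}) ∧
      {x | ∃ s, (inner ℂ (ζ s) (U x ξ) : ℂ) ≠ 0} ⊆ ⋃₀ (C : Set (Set Γ)) := by
  classical
  set Λ := {x | ∃ s, (inner ℂ (ζ s) (U x ξ) : ℂ) ≠ 0} with hΛ
  set T : Set (Set Γ) := {B | ∃ H t, D H ∧ B = {x | x - t ∈ H}} with hT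
  by_contra hcon
  have hcov : ∃ u : Ultrafilter Γ, Λ ∈ u ∧ ∀ B ∈ T, B ∉ u := by
    apply aux_cov
    intro t ht hA
    exact hcon ⟨t, fun B hB => ht hB, hA⟩
  let K : Set 𝓗 := {v | ∃ u : Ultrafilter Γ, Λ ∈ u ∧ (∀ B ∈ T, B ∉ u) ∧
    ∀ η, Tendsto (fun t => (inner ℂ η (U t ξ) : ℂ)) u (𝓝 (inner ℂ η v))}
  have Kclosed : ∀ (ι : Type) (p : Ultrafilter ι) (f : ι → 𝓗) (w : 𝓗),
      (∀ᶠ i in (p : Filter ι), f i ∈ K) →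
      (∀ η, Tendsto (fun i => (inner ℂ η (f i) : ℂ)) p (𝓝 (inner ℂ η w))) → w ∈ K := by
    intro ι p f w hf hw
    have : ∀ i, ∃ u : Ultrafilter Γ, f i ∈ K → (Λ ∈ u ∧ (∀ B ∈ T, B ∉ u) ∧
      ∀ η, Tendsto (fun t => (inner ℂ η (U t ξ) : ℂ)) u (𝓝 (inner ℂ η (f i)))) := by
      intro i
      by_cases h : f i ∈ K
      · obtain ⟨u, hu⟩ := h
        exact ⟨u, fun _ => hu⟩
      · exact ⟨hcov.choose, fun h' => absurd h' h⟩
    choose u hu using this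
    have mb : ∀ A : Set Γ, A ∈ p.bind u ↔ ∀ᶠ i in (p : Filter ι), A ∈ u i := fun A => Iff.rfl
    refine ⟨p.bind u, ?_, ?_, ?_⟩
    · rw [mb]; filter_upwards [hf] with i hi using (hu i hi).1
    · intro B hB
      rw [← Ultrafilter.compl_mem_iff_notMem, mb]
      filter_upwards [hf] with i hi
      exact Ultrafilter.compl_mem_iff_notMem.mpr ((hu i hi).2.1 B hB)
    · intro η
      rw [Metric.tendsto_nhds]
      intro ε hε
      show _ ∈ p.bind u
      rw [mb]
      filter_upwards [hf, (Metric.tendsto_nhds.mp (hw η)) (ε/2) (half_pos hε)] with i hi hi2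
      have := (Metric.tendsto_nhds.mp ((hu i hi).2.2 η)) (ε/2) (half_pos hε)
      filter_upwards [this] with t ht
      calc _ ≤ _ := dist_triangle _ _ _
        _ < ε/2 + ε/2 := add_lt_add ht hi2
        _ = ε := by ring
  have Kbdd : ∀ v ∈ K, ‖v‖ ≤ ‖ξ‖ := by
    rintro v ⟨u, -, -, hu⟩
    obtain ⟨v', h1, h2⟩ := aux_wlim u (fun t => U t ξ) ‖ξ‖ (Eventually.of_forall fun t => (hn t ξ).le)
    have : v = v' := ext_inner_left ℂ fun η => tendsto_nhds_unique (hu η) (h1 η)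
    rw [this]; exact h2
  have Kne : K.Nonempty := by
    obtain ⟨u, h1, h2⟩ := hcov
    obtain ⟨v', h3, -⟩ := aux_wlim u (fun t => U t ξ) ‖ξ‖ (Eventually.of_forall fun t => (hn t ξ).le)
    exact ⟨v', u, h1, h2, h3⟩
  -- minimizer
  obtain ⟨v, hvK, hvmin⟩ : ∃ v ∈ K, ∀ w ∈ K, ‖v‖ ≤ ‖w‖ := by
    set m := sInf (norm '' K)
    have hbd : BddBelow (norm '' K) := ⟨0, by rintro _ ⟨v, -, rfl⟩; exact norm_nonneg v⟩
    have : ∀ n : ℕ, ∃ v ∈ K, ‖v‖ < m + 1 / ((n : ℝ) + 1) := by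
      intro n
      obtain ⟨_, ⟨v, hv, rfl⟩, h⟩ := exists_lt_of_csInf_lt (Kne.image norm)
        (show m < m + 1 / ((n : ℝ) + 1) by have : (0:ℝ) < 1 / ((n : ℝ) + 1) := by positivity
                                           linarith)
      exact ⟨v, hv, h⟩
    choose f hf1 hf2 using this
    let p : Ultrafilter ℕ := hyperfilter ℕ
    obtain ⟨w, hw, -⟩ := aux_wlim p f ‖ξ‖ (Eventually.of_forall fun n => Kbdd _ (hf1 n))
    have hwK : w ∈ K := Kclosed ℕ p f w (Eventually.of_forall hf1) hw
    refine ⟨w, hwK, ?_⟩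
    have hp : (p : Filter ℕ) ≤ atTop := by
      rw [← Nat.cofinite_eq_atTop]; exact hyperfilter_le_cofinite
    have hle : ∀ δ > 0, ‖w‖ ≤ m + δ := by
      intro δ hδ
      have ev : ∀ᶠ n in (p : Filter ℕ), ‖f n‖ ≤ m + δ := by
        apply hp
        have := (tendsto_one_div_add_atTop_nhds_zero_nat (𝕜 := ℝ)).eventually (gt_mem_nhds hδ)
        filter_upwards [this] with n hn'
        have := hf2 n
        linarith
      obtain ⟨w', h1, h2⟩ := aux_wlim p f (m + δ) ev
      have : w = w' := ext_inner_left ℂ fun η => tendsto_nhds_unique (hw η) (h1 η)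
      rw [this]; exact h2
    intro w' hw'
    exact (le_of_forall_pos_le_add hle).trans (csInf_le hbd ⟨w', hw', rfl⟩)
  obtain ⟨u, hu1, hu2, hu3⟩ := hvK
  let g : Fin S → Γ → ℂ := fun s x => inner ℂ (ζ s) (U x v)
  have hg : ∀ s x, Tendsto (fun t => (inner ℂ (ζ s) (U (x + t) ξ) : ℂ)) u (𝓝 (g s x)) := by
    intro s x
    have := hu3 (U (-x) (ζ s))
    simp only [g]
    rw [hadj]
    refine this.congr fun t => ?_
    rw [← hadj, hadd]
  let Q : Set Γ := {x | ∃ s, g s x ≠ 0}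
  have hQ1 : ∀ x, x ∈ Q → {t | x + t ∈ Λ} ∈ u := by
    rintro x ⟨s, hs⟩
    have := (hg s x).eventually_ne hs
    filter_upwards [this] with t ht using ⟨s, ht⟩
  have hgap' : ∀ x, {t | x + t ∈ Λ} ∈ u → c ≤ ∑ s, ‖g s x‖ := by
    intro x hx
    have : Tendsto (fun t => ∑ s, ‖(inner ℂ (ζ s) (U (x + t) ξ) : ℂ)‖) u (𝓝 (∑ s, ‖g s x‖)) :=
      tendsto_finsetSum _ fun s _ => (hg s x).norm
    refine ge_of_tendsto this ?_
    filter_upwards [hx] with t ht using gap _ ht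
  have hQ2 : ∀ x, c ≤ ∑ s, ‖g s x‖ → x ∈ Q := by
    intro x hx
    by_contra h
    have h0 : ∀ s, g s x = 0 := by simpa [Q] using h
    simp [h0] at hx
    linarith
  have h0Q : (0 : Γ) ∈ Q := by
    apply hQ2; apply hgap'
    simpa using hu1
  have hQK : ∀ y ∈ Q, U y v ∈ K := by
    intro y hy
    refine ⟨u.map (fun t => y + t), hQ1 y hy, ?_, ?_⟩
    · rintro B ⟨H, t, hH, rfl⟩ hB
      refine hu2 {x | x - (t - y) ∈ H} ⟨H, t - y, hH, rfl⟩ ?_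
      have hB' : {x | y + x - t ∈ H} ∈ u := hB
      convert hB' using 4
      abel
    · intro η
      have := hu3 (U (-y) η)
      rw [← hadj] at this
      rw [Ultrafilter.coe_map, tendsto_map'_iff]
      refine this.congr fun t => ?_
      simp only [Function.comp]
      rw [← hadj, hadd]
  -- stabilizer
  let H : AddSubgroup Γ :=
    { carrier := {τ | ∀ x, x + τ ∈ Q ↔ x ∈ Q}
      zero_mem' := by intro x; simp
      add_mem' := by
        intro a b ha hb x
        rw [← add_assoc, hb, ha]
      neg_mem' := by
        intro a ha x
        rw [← ha (x + -a)]; simp }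
  have hHQ : ∀ τ ∈ H, τ ∈ Q := by
    intro τ hτ
    have := (hτ 0).2 h0Q
    simpa using this
  have hDH : D H := by
    apply hD
    intro F hF
    have : ∀ x ∈ F, {t | x + t ∈ Λ} ∈ (u : Filter Γ) := fun x hx => hQ1 x (hHQ x (hF hx))
    have h2 := (Filter.biInter_finset_mem F).2 this
    obtain ⟨t, ht⟩ := u.nonempty_of_mem h2
    refine ⟨t, fun x hx => ?_⟩
    simp only [mem_iInter] at ht
    exact ht x hx
  -- Q is covered by finitely many cosets of H
  obtain ⟨C, hC1, hC2⟩ : ∃ C : Finset (Set Γ), (∀ B ∈ C, ∃ t, B = {x | x - t ∈ H}) ∧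
      Q ⊆ ⋃₀ (C : Set (Set Γ)) := by
    by_contra hno
    obtain ⟨p, hp1, hp2⟩ := aux_cov Q {B | ∃ t, B = {x | x - t ∈ H}} (by
      intro t ht hA
      exact hno ⟨t, fun B hB => ht hB, hA⟩)
    obtain ⟨w, hw, hwn⟩ := aux_wlim p (fun y => U y v) ‖v‖ (Eventually.of_forall fun t => (hn t v).le)
    have hwK : w ∈ K := Kclosed Γ p _ w (by filter_upwards [hp1] with y hy using hQK y hy) hw
    have hnorm : ‖w‖ = ‖v‖ := le_antisymm hwn (hvmin w hwK)
    have hstrong : Tendsto (fun y => ‖U y v - w‖ ^ 2) p (𝓝 0) := by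
      have e : ∀ y, ‖U y v - w‖ ^ 2 = 2 * ‖v‖ ^ 2 - 2 * (inner ℂ w (U y v) : ℂ).re := by
        intro y
        rw [@norm_sub_sq ℂ, hn, hnorm, inner_re_symm]
        simp only [RCLike.re_to_complex]
        ring
      simp_rw [e]
      have h1 := (Complex.continuous_re.tendsto _).comp (hw w)
      have h2 := (tendsto_const_nhds (x := 2 * ‖v‖ ^ 2)).sub (h1.const_mul 2)
      have h3 : (inner ℂ w w : ℂ).re = ‖w‖ ^ 2 := by
        have := inner_self_eq_norm_sq (𝕜 := ℂ) w
        simpa only [RCLike.re_to_complex] using this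
      rw [h3, hnorm, sub_self] at h2
      exact h2
    -- constant
    set Z := ∑ s, ‖ζ s‖ with hZ
    have hZ0 : 0 ≤ Z := Finset.sum_nonneg fun s _ => norm_nonneg _
    set δ := c / (2 * (Z + 1)) with hδ
    have hδ0 : 0 < δ := by positivity
    have ev : ∀ᶠ y in (p : Filter Γ), ‖U y v - w‖ < δ := by
      have := hstrong.eventually (gt_mem_nhds (show (0:ℝ) < δ ^ 2 by positivity))
      filter_upwards [this] with y hy
      exact lt_of_pow_lt_pow_left₀ 2 hδ0.le hy
    obtain ⟨y', hy'⟩ := p.nonempty_of_mem ev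
    refine hp2 {x | x - y' ∈ H} ⟨y', rfl⟩ ?_
    have key : ∀ y1 y2, ‖U y1 v - w‖ < δ → ‖U y2 v - w‖ < δ → ∀ x, x + y1 ∈ Q → x + y2 ∈ Q := by
      intro y1 y2 h1 h2 x hx
      by_contra hx2
      have hz : ∀ s, g s (x + y2) = 0 := by simpa [Q] using hx2
      have hgx := hgap' _ (hQ1 _ hx)
      have hb : ∀ s, ‖g s (x + y1)‖ ≤ ‖ζ s‖ * (δ + δ) := by
        intro s
        have : g s (x + y1) = inner ℂ (U (-x) (ζ s)) (U y1 v - U y2 v) := by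
          rw [inner_sub_right, ← hadj, ← hadj, ← hadd, ← hadd]
          show _ = g s (x + y1) - g s (x + y2)
          rw [hz, sub_zero]
        rw [this]
        refine (norm_inner_le_norm _ _).trans ?_
        rw [hn]
        gcongr
        calc ‖U y1 v - U y2 v‖ = ‖(U y1 v - w) - (U y2 v - w)‖ := by congr 1; abel
          _ ≤ _ := norm_sub_le _ _
          _ ≤ _ := add_le_add h1.le h2.le
      have : ∑ s, ‖g s (x + y1)‖ ≤ Z * (δ + δ) := by
        rw [hZ, Finset.sum_mul]; exact Finset.sum_le_sum fun s _ => hb s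
      have h3 : Z * (δ + δ) < c := by
        have : (Z + 1) * (δ + δ) = c := by rw [hδ]; field_simp; ring
        nlinarith
      linarith
    filter_upwards [ev] with y hy
    show ∀ x, x + (y - y') ∈ Q ↔ x ∈ Q
    intro x
    constructor
    · intro h
      have := key y y' hy hy' (x - y') (by convert h using 1; abel)
      simpa using this
    · intro h
      have := key y' y hy' hy (x - y') (by simpa using h)
      convert this using 1; abel
  -- contradiction
  obtain ⟨w, hw, -⟩ := aux_wlim u (fun t => U (-t) v) ‖v‖ (Eventually.of_forall fun t => (hn _ v).le)
  have hw0 : ∀ x s, (inner ℂ (U x (ζ s)) w : ℂ) = 0 := by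
    intro x s
    refine tendsto_nhds_unique (hw (U x (ζ s))) ?_
    refine tendsto_const_nhds.congr' ?_
    have hav : ∀ᶠ t in (u : Filter Γ), -x - t ∉ Q := by
      have : ∀ B ∈ C, {t | -x - t ∈ B}ᶜ ∈ (u : Filter Γ) := by
        intro B hB
        obtain ⟨t0, rfl⟩ := hC1 B hB
        refine Ultrafilter.compl_mem_iff_notMem.mpr fun hm => ?_
        refine hu2 {y | y - (-x - t0) ∈ H} ⟨H, _, hDH, rfl⟩ ?_
        filter_upwards [hm] with t ht
        have ht' : -x - t - t0 ∈ H := ht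
        show t - (-x - t0) ∈ H
        rw [← H.neg_mem_iff]
        convert ht' using 1
        abel
      have h2 := (Filter.biInter_finset_mem C).2 this
      filter_upwards [h2] with t ht hq
      obtain ⟨B, hB, hm⟩ := hC2 hq
      simp only [mem_iInter] at ht
      exact ht B hB hm
    filter_upwards [hav] with t ht
    have h3 : g s (-x - t) = 0 := by
      by_contra h
      exact ht ⟨s, h⟩
    have e := hadj (-x) (ζ s) (U (-t) v)
    rw [neg_neg] at e
    rw [← e, ← hadd, ← sub_eq_add_neg]
    exact h3.symm
  have h1 : (inner ℂ ξ w : ℂ) = 0 := hcyc w hw0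
  have h2 : (inner ℂ v v : ℂ) = 0 := by
    have ha := (Complex.continuous_conj.tendsto _).comp (hu3 v)
    have hb := hw ξ
    rw [h1] at hb
    rw [← map_eq_zero (starRingEnd ℂ)]
    refine tendsto_nhds_unique ha (hb.congr fun t => ?_)
    simp only [Function.comp]
    rw [hadj t v ξ, inner_conj_symm]
  have hv0 : v = 0 := inner_self_eq_zero.mp h2
  obtain ⟨s, hs⟩ := h0Q
  apply hs
  have : ‖U 0 v‖ = 0 := by rw [hn, hv0, norm_zero]
  simp only [g]
  rw [norm_eq_zero.mp this, inner_zero_right]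


lemma aux_gns {E : Type} [AddCommGroup E] [Module ℂ E] (c : PreInnerProductSpace.Core ℂ E) :
    ∃ (𝓗 : Type) (_ : NormedAddCommGroup 𝓗) (_ : InnerProductSpace ℂ 𝓗) (_ : CompleteSpace 𝓗)
      (j : E →ₗ[ℂ] 𝓗), (∀ u v, inner ℂ (j u) (j v) = c.inner u v) ∧ DenseRange j := by
  letI := c
  letI : SeminormedAddCommGroup E := InnerProductSpace.Core.toSeminormedAddCommGroup (𝕜 := ℂ)
  letI : InnerProductSpace ℂ E := .ofCore _
  refine ⟨UniformSpace.Completion E, inferInstance, inferInstance, inferInstance,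
    (UniformSpace.Completion.toComplL (𝕜 := ℂ) (E := E)).toLinearMap, ?_, ?_⟩
  · intro u v
    simp
  · simpa using UniformSpace.Completion.denseRange_coe (α := E)

theorem gns_abs {E Γ : Type} [AddCommGroup Γ] [AddCommGroup E] [Module ℂ E] {S : ℕ}
    (c : PreInnerProductSpace.Core ℂ E) (m : Γ → E →ₗ[ℂ] E)
    (hm0 : ∀ u, m 0 u = u) (hmadd : ∀ x y u, m (x + y) u = m x (m y u))
    (hmin : ∀ x u v, c.inner (m x u) (m x v) = c.inner u v)
    (Φ : E →ₗ[ℂ] ℂ) (K : ℝ) (hΦ : ∀ u, ‖Φ u‖ ≤ K * Real.sqrt (c.inner u u).re)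
    (z : Fin S → E) :
    ∃ (𝓗 : Type) (_ : NormedAddCommGroup 𝓗) (_ : InnerProductSpace ℂ 𝓗) (_ : CompleteSpace 𝓗)
      (U : Γ → 𝓗 → 𝓗) (ξ : 𝓗) (ζ : Fin S → 𝓗),
      (∀ x y η, U (x + y) η = U x (U y η)) ∧
      (∀ x η η', inner ℂ η (U x η') = inner ℂ (U (-x) η) η') ∧
      (∀ x η, ‖U x η‖ = ‖η‖) ∧
      (∀ v, (∀ x s, (inner ℂ (U x (ζ s)) v : ℂ) = 0) → (inner ℂ ξ v : ℂ) = 0) ∧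
      (∀ s x, (inner ℂ (ζ s) (U x ξ) : ℂ) = (starRingEnd ℂ) (Φ (m x (z s)))) := by
  obtain ⟨𝓗, i1, i2, i3, j, hj, hd⟩ := aux_gns c
  have hnj : ∀ u, ‖j u‖ = Real.sqrt (c.inner u u).re := fun u => by
    rw [← hj, norm_eq_sqrt_re_inner (𝕜 := ℂ)]; rfl
  have hb : ∀ x, ∃ C, ∀ u, ‖(j ∘ₗ m (-x)) u‖ ≤ C * ‖j u‖ := fun x => ⟨1, fun u => by
    simp [hnj, hmin]⟩
  let V : Γ → 𝓗 →L[ℂ] 𝓗 := fun x => (j ∘ₗ m (-x)).extendOfNorm j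
  have hV : ∀ x u, V x (j u) = j (m (-x) u) := fun x u =>
    LinearMap.extendOfNorm_eq hd (hb x) u
  have hVadd : ∀ x y η, V (x + y) η = V x (V y η) := by
    intro x y
    have : ⇑(V (x+y)) = ⇑(V x) ∘ ⇑(V y) := by
      refine hd.equalizer (V (x+y)).continuous ((V x).continuous.comp (V y).continuous) ?_
      funext u
      simp only [Function.comp, hV]
      rw [neg_add, hmadd]
    exact fun η => congrFun this η
  have hV0 : ∀ η, V 0 η = η := by
    have : ⇑(V 0) = id := by
      refine hd.equalizer (V 0).continuous continuous_id ?_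
      funext u
      simp [hV, hm0]
    exact fun η => congrFun this η
  have hVn : ∀ x η, ‖V x η‖ = ‖η‖ := by
    intro x
    have : (fun η => ‖V x η‖) = (fun η => ‖η‖) := by
      refine hd.equalizer (V x).continuous.norm continuous_norm ?_
      funext u
      simp [hV, hnj, hmin]
    exact fun η => congrFun this η
  have hVin : ∀ x η η', (inner ℂ (V x η) (V x η') : ℂ) = inner ℂ η η' := by
    intro x
    let W : 𝓗 →ₗᵢ[ℂ] 𝓗 := ⟨(V x).toLinearMap, hVn x⟩
    exact fun η η' => W.inner_map_map η η'
  have hVadj : ∀ x η η', (inner ℂ η (V x η') : ℂ) = inner ℂ (V (-x) η) η' := by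
    intro x η η'
    rw [← hVin x (V (-x) η), ← hVadd]
    simp [hV0]
  let Ψ : 𝓗 →L[ℂ] ℂ := Φ.extendOfNorm j
  have hΨ : ∀ u, Ψ (j u) = Φ u := fun u =>
    LinearMap.extendOfNorm_eq hd ⟨K, fun u => by rw [hnj]; exact hΦ u⟩ u
  let ξ0 : 𝓗 := (InnerProductSpace.toDual ℂ 𝓗).symm Ψ
  have hξ0 : ∀ v, (inner ℂ ξ0 v : ℂ) = Ψ v := fun v => InnerProductSpace.toDual_symm_apply
  let Y : Submodule ℂ 𝓗 := (Submodule.span ℂ (range fun q : Γ × Fin S => V q.1 (j (z q.2)))).topologicalClosure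
  haveI : CompleteSpace Y := (Submodule.isClosed_topologicalClosure _).completeSpace_coe
  have hY : ∀ x s, V x (j (z s)) ∈ Y := fun x s =>
    Submodule.le_topologicalClosure _ (Submodule.subset_span ⟨(x, s), rfl⟩)
  let ξ : 𝓗 := (Y.orthogonalProjection ξ0 : 𝓗)
  refine ⟨𝓗, i1, i2, i3, fun x => V x, ξ, fun s => j (z s), hVadd, hVadj, hVn, ?_, ?_⟩
  · intro v hv
    have : v ∈ Yᗮ := by
      rw [Submodule.orthogonal_closure, Submodule.mem_orthogonal]
      intro u hu
      induction hu using Submodule.span_induction with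
      | mem u hu => obtain ⟨⟨x, s⟩, rfl⟩ := hu; exact hv x s
      | zero => simp
      | add u w _ _ h1 h2 => rw [inner_add_left, h1, h2, add_zero]
      | smul r u _ h1 => rw [inner_smul_left, h1, mul_zero]
    exact (Submodule.mem_orthogonal _ _).1 this ξ (Submodule.coe_mem _)
  · intro s x
    rw [hVadj, ← inner_conj_symm]
    congr 1
    have h1 : (inner ℂ (ξ0 - ξ) (V (-x) (j (z s))) : ℂ) = 0 := by
      have := Submodule.sub_starProjection_mem_orthogonal (K := Y) ξ0
      exact (Submodule.mem_orthogonal' _ _).1 this _ (hY _ _)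
    rw [inner_sub_left, sub_eq_zero] at h1
    rw [← h1, hξ0, hV, hΨ, neg_neg]

open Filter Topology in
lemma aux_ulim (p : Ultrafilter ℕ) (f : ℕ → ℂ) (R : ℝ) (hf : ∀ n, ‖f n‖ ≤ R) :
    ∃ z, Tendsto f p (𝓝 z) := by
  obtain ⟨z, -, hz⟩ := (isCompact_closedBall (0:ℂ) R).ultrafilter_le_nhds' (p.map f) (by
    show ∀ᶠ n in (p : Filter ℕ), _
    exact Eventually.of_forall fun n => by simpa using hf n)
  exact ⟨z, hz⟩

def auxBF (I : Type) : Submodule ℂ (I → ℂ) where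
  carrier := {u | ∃ R : ℝ, 0 ≤ R ∧ ∀ i, ‖u i‖ ≤ R}
  zero_mem' := ⟨0, by simp⟩
  add_mem' := by
    rintro u v ⟨R, h0, hR⟩ ⟨R', h0', hR'⟩
    exact ⟨R + R', by positivity, fun i => (norm_add_le _ _).trans (add_le_add (hR i) (hR' i))⟩
  smul_mem' := by
    rintro c u ⟨R, h0, hR⟩
    exact ⟨‖c‖ * R, by positivity, fun i => by
      simp only [Pi.smul_apply, norm_smul]
      exact mul_le_mul_of_nonneg_left (hR i) (norm_nonneg _)⟩

lemma auxBF_mul {I : Type} {u v : I → ℂ} (hu : u ∈ auxBF I) (hv : v ∈ auxBF I) :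
    (fun i => u i * v i) ∈ auxBF I := by
  obtain ⟨R, h0, hR⟩ := hu
  obtain ⟨R', h0', hR'⟩ := hv
  exact ⟨R * R', by positivity, fun i => by
    rw [norm_mul]; exact mul_le_mul (hR i) (hR' i) (norm_nonneg _) h0⟩

lemma auxBF_conj {I : Type} {u : I → ℂ} (hu : u ∈ auxBF I) :
    (fun i => (starRingEnd ℂ) (u i)) ∈ auxBF I := by
  obtain ⟨R, h0, hR⟩ := hu
  exact ⟨R, h0, fun i => by simpa using hR i⟩

lemma auxBF_of_le {I : Type} {u : I → ℂ} (hu : ∀ i, ‖u i‖ ≤ 1) : u ∈ auxBF I :=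
  ⟨1, zero_le_one, hu⟩

lemma aux_bsum {I : Type} (β : I → ℝ) (C : ℝ) (hs : Summable β) (hC : ∑' i, β i ≤ C)
    (k u : I → ℂ) (R : ℝ) (hk : ∀ i, ‖k i‖ ≤ β i) (hR : 0 ≤ R) (hu : ∀ i, ‖u i‖ ≤ R) :
    (Summable fun i => k i * u i) ∧ ‖∑' i, k i * u i‖ ≤ C * R := by
  have hb : ∀ i, ‖k i * u i‖ ≤ β i * R := fun i => by
    rw [norm_mul]
    exact mul_le_mul (hk i) (hu i) (norm_nonneg _) ((norm_nonneg _).trans (hk i))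
  have h1 : Summable fun i => ‖k i * u i‖ :=
    Summable.of_nonneg_of_le (fun i => norm_nonneg _) hb (hs.mul_right R)
  refine ⟨h1.of_norm, ?_⟩
  refine (norm_tsum_le_tsum_norm h1).trans ?_
  refine (h1.tsum_le_tsum hb (hs.mul_right R)).trans ?_
  rw [tsum_mul_right]
  exact mul_le_mul_of_nonneg_right hC hR

open Filter Topology in
lemma aux_lin {I : Type} (p : Ultrafilter ℕ) (β : ℕ → I → ℝ) (C : ℝ) (hs : ∀ n, Summable (β n))
    (hC : ∀ n, ∑' i, β n i ≤ C) (k : ℕ → I → ℂ) (hk : ∀ n i, ‖k n i‖ ≤ β n i) :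
    ∃ l : auxBF I →ₗ[ℂ] ℂ, ∀ u : auxBF I,
      Tendsto (fun n => ∑' i, k n i * (u : I → ℂ) i) p (𝓝 (l u)) := by
  have hex : ∀ u : auxBF I, ∃ z, Tendsto (fun n => ∑' i, k n i * (u : I → ℂ) i) p (𝓝 z) := by
    rintro ⟨u, R, h0, hR⟩
    exact aux_ulim p _ (C * R) fun n => (aux_bsum (β n) C (hs n) (hC n) _ _ R (hk n) h0 hR).2
  have hsum : ∀ (u : auxBF I) n, Summable fun i => k n i * (u : I → ℂ) i := by
    rintro ⟨u, R, h0, hR⟩ n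
    exact (aux_bsum (β n) C (hs n) (hC n) _ _ R (hk n) h0 hR).1
  choose l hl using hex
  refine ⟨⟨⟨l, ?_⟩, ?_⟩, hl⟩
  · intro u v
    refine tendsto_nhds_unique (hl (u + v)) (((hl u).add (hl v)).congr fun n => ?_)
    rw [← (hsum u n).tsum_add (hsum v n)]
    simp [mul_add]
  · intro r u
    refine tendsto_nhds_unique (hl (r • u)) (((hl u).const_mul r).congr fun n => ?_)
    rw [← tsum_mul_left]
    congr 1
    funext i
    simp only [Submodule.coe_smul, Pi.smul_apply, smul_eq_mul]; ring

open Filter Topology in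
theorem gns_main {I Γ : Type} [AddCommGroup Γ] {S : ℕ} (β : ℕ → I → ℂ) (C : ℝ)
    (hs : ∀ n, Summable fun i => ‖β n i‖) (hC : ∀ n, ∑' i, ‖β n i‖ ≤ C)
    (M : Γ → I → ℂ) (hM : ∀ x i, ‖M x i‖ = 1) (hMadd : ∀ x y i, M (x + y) i = M x i * M y i)
    (σ : Fin S → I → ℂ) (hσ : ∀ s i, ‖σ s i‖ ≤ 1) (a : Fin S → Γ → ℂ)
    (ha : ∀ s x, Tendsto (fun n => ∑' i, β n i * (M x i * σ s i)) atTop (𝓝 (a s x))) :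
    ∃ (𝓗 : Type) (_ : NormedAddCommGroup 𝓗) (_ : InnerProductSpace ℂ 𝓗) (_ : CompleteSpace 𝓗)
      (U : Γ → 𝓗 → 𝓗) (ξ : 𝓗) (ζ : Fin S → 𝓗),
      (∀ x y η, U (x + y) η = U x (U y η)) ∧
      (∀ x η η', inner ℂ η (U x η') = inner ℂ (U (-x) η) η') ∧
      (∀ x η, ‖U x η‖ = ‖η‖) ∧
      (∀ v, (∀ x s, (inner ℂ (U x (ζ s)) v : ℂ) = 0) → (inner ℂ ξ v : ℂ) = 0) ∧
      (∀ s x, (inner ℂ (ζ s) (U x ξ) : ℂ) = (starRingEnd ℂ) (a s x)) := by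
  classical
  let p : Ultrafilter ℕ := hyperfilter ℕ
  have hp : (p : Filter ℕ) ≤ atTop := by
    rw [← Nat.cofinite_eq_atTop]; exact hyperfilter_le_cofinite
  have hC0 : 0 ≤ C := (tsum_nonneg fun i => norm_nonneg (β 0 i)).trans (hC 0)
  obtain ⟨Φ, hΦ⟩ := aux_lin p (fun n i => ‖β n i‖) C hs hC β (fun n i => le_rfl)
  obtain ⟨ρ, hρ⟩ := aux_lin p (fun n i => ‖β n i‖) C hs hC (fun n i => ((‖β n i‖ : ℝ) : ℂ))
    (fun n i => by simp)
  let q : auxBF I → auxBF I → auxBF I := fun u v =>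
    ⟨fun i => (starRingEnd ℂ) ((u : I → ℂ) i) * (v : I → ℂ) i, auxBF_mul (auxBF_conj u.2) v.2⟩
  have hsq : ∀ (u : auxBF I) n, Summable fun i => ‖β n i‖ * ‖(u : I → ℂ) i‖ ^ 2 := by
    intro u n
    obtain ⟨R, h0, hR⟩ := u.2
    exact Summable.of_nonneg_of_le (fun i => by positivity) (fun i => by
      gcongr; exact hR i) ((hs n).mul_right (R ^ 2))
  have hqq : ∀ (u : auxBF I) n, ∑' i, ((‖β n i‖ : ℝ) : ℂ) * (q u u : I → ℂ) i
      = ((∑' i, ‖β n i‖ * ‖(u : I → ℂ) i‖ ^ 2 : ℝ) : ℂ) := by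
    intro u n
    rw [Complex.ofReal_tsum]
    congr 1
    funext i
    simp only [q, Complex.conj_mul']
    push_cast; rfl
  have hre : ∀ u : auxBF I, Tendsto (fun n => ∑' i, ‖β n i‖ * ‖(u : I → ℂ) i‖ ^ 2) p
      (𝓝 (ρ (q u u)).re) := by
    intro u
    have := (Complex.continuous_re.tendsto _).comp (hρ (q u u))
    refine this.congr fun n => ?_
    simp only [Function.comp]
    rw [hqq, Complex.ofReal_re]
  let c : PreInnerProductSpace.Core ℂ (auxBF I) :=
    { inner := fun u v => ρ (q u v)
      conj_inner_symm := by
        intro u v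
        have h1 := (Complex.continuous_conj.tendsto _).comp (hρ (q v u))
        refine tendsto_nhds_unique h1 ((hρ (q u v)).congr fun n => ?_)
        simp only [Function.comp]
        rw [Complex.conj_tsum]
        congr 1
        funext i
        simp [q, mul_comm]
      re_inner_nonneg := by
        intro u
        exact ge_of_tendsto (hre u) (Eventually.of_forall fun n => tsum_nonneg fun i => by positivity)
      add_left := by
        intro u v w
        rw [← map_add]
        congr 1
        ext i
        simp [q, add_mul]
      smul_left := by
        intro u v r
        rw [← smul_eq_mul, ← map_smul]
        congr 1
        ext i
        simp [q, mul_assoc] }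
  have hMb : ∀ x, M x ∈ auxBF I := fun x => auxBF_of_le fun i => (hM x i).le
  let m : Γ → auxBF I →ₗ[ℂ] auxBF I := fun x =>
    { toFun := fun u => ⟨fun i => M x i * (u : I → ℂ) i, auxBF_mul (hMb x) u.2⟩
      map_add' := by intro u v; ext i; simp [mul_add]
      map_smul' := by intro r u; ext i; simp; ring }
  have hM0 : ∀ i, M 0 i = 1 := by
    intro i
    have h := hMadd 0 0 i
    rw [add_zero] at h
    have h2 : M 0 i ≠ 0 := by intro h3; have := hM 0 i; rw [h3] at this; simp at this
    exact (mul_left_cancel₀ h2 (by rw [mul_one]; exact h)).symm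
  have key : ∀ (u : auxBF I) (δ : ℝ), 0 < δ → ‖Φ u‖ ≤ (δ * C + (ρ (q u u)).re / δ) / 2 := by
    intro u δ hδ
    have h1 := (hΦ u).norm
    have h2 := ((hre u).div_const δ).const_add (δ * C) |>.div_const 2
    refine le_of_tendsto_of_tendsto' h1 h2 fun n => ?_
    obtain ⟨R, h0, hR⟩ := u.2
    have hb : ∀ i, ‖β n i * (u : I → ℂ) i‖ ≤ (‖β n i‖ * δ + (‖β n i‖ * ‖(u : I → ℂ) i‖ ^ 2) / δ) / 2 := by
      intro i
      rw [norm_mul]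
      have : ‖(u : I → ℂ) i‖ ≤ (δ + ‖(u : I → ℂ) i‖ ^ 2 / δ) / 2 := by
        have h3 : δ + ‖(u : I → ℂ) i‖ ^ 2 / δ - 2 * ‖(u : I → ℂ) i‖ = (δ - ‖(u : I → ℂ) i‖) ^ 2 / δ := by
          field_simp; ring
        have h4 : 0 ≤ (δ - ‖(u : I → ℂ) i‖) ^ 2 / δ := by positivity
        linarith
      calc _ ≤ ‖β n i‖ * ((δ + ‖(u : I → ℂ) i‖ ^ 2 / δ) / 2) := by gcongr
        _ = _ := by ring
    have hS2 := (hsq u n).div_const δ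
    have hS1 := (hs n).mul_right δ
    have hS := (hS1.add hS2).div_const 2
    have hN := Summable.of_nonneg_of_le (fun i => norm_nonneg _) hb hS
    calc _ ≤ ∑' i, ‖β n i * (u : I → ℂ) i‖ := norm_tsum_le_tsum_norm hN
      _ ≤ _ := hN.tsum_le_tsum hb hS
      _ = ((∑' i, ‖β n i‖) * δ + (∑' i, ‖β n i‖ * ‖(u : I → ℂ) i‖ ^ 2) / δ) / 2 := by
        rw [tsum_div_const, hS1.tsum_add hS2, tsum_mul_right, tsum_div_const]
      _ ≤ _ := by
        have := mul_le_mul_of_nonneg_right (hC n) hδ.le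
        linarith
  have hpos : ∀ u : auxBF I, 0 ≤ (ρ (q u u)).re := fun u =>
    ge_of_tendsto (hre u) (Eventually.of_forall fun n => tsum_nonneg fun i => by positivity)
  have hbound : ∀ u, ‖Φ u‖ ≤ ((C + 1) / 2) * Real.sqrt (c.inner u u).re := by
    intro u
    show ‖Φ u‖ ≤ ((C + 1) / 2) * Real.sqrt (ρ (q u u)).re
    rcases (hpos u).eq_or_lt with h | h
    · rw [← h]
      simp only [Real.sqrt_zero, mul_zero]
      refine le_of_forall_pos_le_add fun e he => ?_
      refine (key u (e / (C + 1)) (by positivity)).trans ?_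
      rw [← h]
      have : e / (C + 1) * C ≤ e := by
        rw [div_mul_eq_mul_div, div_le_iff₀ (by positivity)]
        nlinarith
      simp only [zero_div]
      linarith
    · have h1 := key u _ (Real.sqrt_pos.2 h)
      rw [Real.div_sqrt] at h1
      linarith
  have := gns_abs (Γ := Γ) (S := S) c m (fun u => by ext i; simp [m, hM0]) (fun x y u => by
    ext i; simp [m, hMadd, mul_assoc]) (fun x u v => by
    show ρ (q (m x u) (m x v)) = ρ (q u v)
    congr 1
    ext i
    have h1 : (starRingEnd ℂ) (M x i) * M x i = 1 := by rw [Complex.conj_mul', hM]; simp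
    simp only [q, m, LinearMap.coe_mk, AddHom.coe_mk, map_mul]
    linear_combination ((starRingEnd ℂ) ((u : I → ℂ) i) * (v : I → ℂ) i) * h1) Φ _ hbound
    (fun s => ⟨σ s, auxBF_of_le (hσ s)⟩)
  obtain ⟨𝓗, i1, i2, i3, U, ξ, ζ, h1, h2, h3, h4, h5⟩ := this
  refine ⟨𝓗, i1, i2, i3, U, ξ, ζ, h1, h2, h3, h4, fun s x => ?_⟩
  rw [h5]
  congr 1
  exact tendsto_nhds_unique (hΦ _) ((ha s x).mono_left hp)

open FourierTransform in
lemma aux_four {d : ℕ} (χ : Rd d → ℂ) (x : Rd d) (ε : ℝ) (hε : 0 < ε) (γ : Rd d) :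
    (𝓕⁻ (fun v => χ (ε⁻¹ • (v - x)))) γ = ((ε : ℂ) ^ d * (𝓕⁻ χ) (ε • γ)) * e2pi x γ := by
  rw [Real.fourierInv_eq', Real.fourierInv_eq']
  rw [← integral_add_right_eq_self _ x]
  have h1 : ∀ w : Rd d, Complex.exp (((2 * Real.pi * ⟪w + x, γ⟫ : ℝ) : ℂ) * Complex.I) • χ (ε⁻¹ • (w + x - x))
     = e2pi x γ * (fun u : Rd d => Complex.exp (((2 * Real.pi * ⟪u, ε • γ⟫ : ℝ) : ℂ) * Complex.I) • χ u) (ε⁻¹ • w) := by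
    intro w
    simp only [add_sub_cancel_right, smul_eq_mul, ← mul_assoc]
    congr 1
    rw [e2pi, ← Complex.exp_add, inner_smul_left, inner_smul_right, inner_add_left]
    congr 1
    have : (ε : ℂ) ≠ 0 := by exact_mod_cast hε.ne'
    push_cast
    simp only [conj_trivial]
    push_cast
    field_simp
    ring
  simp_rw [h1]
  rw [integral_const_mul, Measure.integral_comp_inv_smul volume (fun u : Rd d =>
    Complex.exp (((2 * Real.pi * ⟪u, ε • γ⟫ : ℝ) : ℂ) * Complex.I) • χ u) ε]
  simp only [finrank_euclideanSpace, Fintype.card_fin, abs_of_pos (pow_pos hε d), Complex.real_smul]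
  push_cast
  ring

lemma aux_dyad (K : ℝ) (hK : 0 ≤ K) (d : ℕ) (y : ℝ) (hy : 0 ≤ y) :
    ∃ k : ℕ, y < 2 ^ k ∧ K / (1 + y) ^ (d + 1) ≤ K * 2 ^ (d + 1) / (2 ^ k) ^ (d + 1) := by
  classical
  have hex : ∃ k : ℕ, y < 2 ^ k := pow_unbounded_of_one_lt y (by norm_num)
  refine ⟨Nat.find hex, Nat.find_spec hex, ?_⟩
  have key : (2:ℝ) ^ (Nat.find hex) ≤ 2 * (1 + y) := by
    rcases Nat.eq_zero_or_pos (Nat.find hex) with h | h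
    · rw [h]; simp; linarith
    · have h2 := Nat.find_min hex (Nat.sub_lt h one_pos)
      rw [not_lt] at h2
      obtain ⟨m, hm⟩ : ∃ m, Nat.find hex = m + 1 := ⟨Nat.find hex - 1, by omega⟩
      rw [hm] at h2 ⊢
      simp only [Nat.add_sub_cancel] at h2
      rw [pow_succ]; linarith
  rw [div_le_div_iff₀ (by positivity) (by positivity), mul_assoc, ← mul_pow]
  gcongr

lemma aux_bound {d : ℕ} (b : Rd d → ℂ) (g : Rd d → ℂ) (K C r₀ : ℝ) (hK : 0 ≤ K)
    (hg : ∀ y, ‖g y‖ ≤ K / (1 + ‖y‖) ^ (d + 1))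
    (hvar : ∀ r ≥ r₀, ballVar b r ≤ ENNReal.ofReal (C * r ^ d)) :
    ∃ B : ℝ, ∀ ε : ℝ, 0 < ε → r₀ ≤ ε⁻¹ →
      ∑' γ, ‖b γ * ((ε : ℂ) ^ d * g (ε • γ))‖ₑ ≤ ENNReal.ofReal B := by
  refine ⟨∑' k : ℕ, (K * 2 ^ (d + 1) * |C|) * (1 / 2 : ℝ) ^ k, fun ε hε hr => ?_⟩
  have hterm : ∀ γ : Rd d, ‖b γ * ((ε : ℂ) ^ d * g (ε • γ))‖ₑ ≤
      ∑' k : ℕ, ENNReal.ofReal (ε ^ d * (K * 2 ^ (d + 1) / (2 ^ k) ^ (d + 1))) *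
        (if ‖γ‖ < 2 ^ k * ε⁻¹ then (‖b γ‖₊ : ℝ≥0∞) else 0) := by
    intro γ
    obtain ⟨k, hk1, hk2⟩ := aux_dyad K hK d (‖ε • γ‖) (norm_nonneg _)
    refine le_trans ?_ (ENNReal.le_tsum k)
    have h3 : ‖γ‖ < 2 ^ k * ε⁻¹ := by
      rw [norm_smul, Real.norm_of_nonneg hε.le] at hk1
      rw [← div_eq_mul_inv, lt_div_iff₀ hε]; linarith
    rw [if_pos h3, enorm_mul, mul_comm]
    gcongr
    · rw [← ofReal_norm]
      apply ENNReal.ofReal_le_ofReal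
      rw [norm_mul, norm_pow, Complex.norm_real, Real.norm_of_nonneg hε.le]
      gcongr
      exact (hg _).trans hk2
    · exact le_rfl
  calc _ ≤ _ := ENNReal.tsum_le_tsum hterm
    _ = ∑' k : ℕ, ∑' γ, ENNReal.ofReal (ε ^ d * (K * 2 ^ (d + 1) / (2 ^ k) ^ (d + 1))) *
        (if ‖γ‖ < 2 ^ k * ε⁻¹ then (‖b γ‖₊ : ℝ≥0∞) else 0) := ENNReal.tsum_comm
    _ ≤ ∑' k : ℕ, ENNReal.ofReal ((K * 2 ^ (d + 1) * |C|) * (1 / 2 : ℝ) ^ k) := by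
      refine ENNReal.tsum_le_tsum fun k => ?_
      rw [ENNReal.tsum_mul_left]
      have h1 : ballVar b (2 ^ k * ε⁻¹) ≤ ENNReal.ofReal (|C| * (2 ^ k * ε⁻¹) ^ d) := by
        refine (hvar _ ?_).trans (ENNReal.ofReal_le_ofReal ?_)
        · refine hr.trans ?_
          exact le_mul_of_one_le_left (by positivity) (one_le_pow₀ (by norm_num))
        · gcongr; exact le_abs_self C
      refine (mul_le_mul_right h1 _).trans ?_
      rw [← ENNReal.ofReal_mul (by positivity)]
      apply ENNReal.ofReal_le_ofReal
      apply le_of_eq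
      rw [mul_pow, pow_succ ((2:ℝ)^k) d, inv_pow, div_pow, one_pow]
      field_simp
    _ = _ := by
      rw [ENNReal.ofReal_tsum_of_nonneg (fun k => by positivity)]
      exact (summable_geometric_of_lt_one (by norm_num) (by norm_num)).mul_left _

lemma aux_iso {d : ℕ} (A : Set (Rd d)) (hA : UniformlyDiscrete A) (x : Rd d) :
    ∃ e > 0, ∀ y ∈ A, y ≠ x → e ≤ dist y x := by
  obtain ⟨η, hη, h⟩ := hA
  by_cases hex : ∃ y ∈ A, y ≠ x ∧ dist y x < η / 2
  · obtain ⟨y, hy, hyx, hd⟩ := hex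
    refine ⟨dist y x, dist_pos.2 hyx, fun z hz hzx => ?_⟩
    by_contra! hlt
    have hne : z ≠ y := by rintro rfl; exact lt_irrefl _ hlt
    have := h z hz y hy hne
    have := dist_triangle_right z y x
    linarith
  · push Not at hex
    exact ⟨η / 2, by positivity, hex⟩

open FourierTransform in
lemma aux_an {d : ℕ} : ∃ g : Rd d → ℂ, (∃ K, 0 ≤ K ∧ ∀ y, ‖g y‖ ≤ K / (1 + ‖y‖) ^ (d + 1)) ∧
    ∀ (a b : Rd d → ℂ) (f : TemperedDist d), RepMeasure a f → UniformlyDiscrete {x | a x ≠ 0} →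
      RepMeasure b (fourierTD f) → ∀ x, ∃ e > 0, ∀ ε : ℝ, 0 < ε → ε < e →
        a x = ∑' γ, b γ * ((ε : ℂ) ^ d * g (ε • γ)) * e2pi x γ := by
  let χ0 : ContDiffBump (0 : Rd d) := ⟨1/2, 1, by norm_num, by norm_num⟩
  let χ : Rd d → ℂ := fun v => ((χ0 v : ℝ) : ℂ)
  have hχs : ContDiff ℝ ((⊤ : ℕ∞) : WithTop ℕ∞) χ := Complex.ofRealCLM.contDiff.comp χ0.contDiff
  have hχc : HasCompactSupport χ := χ0.hasCompactSupport.comp_left (g := fun t : ℝ => (t : ℂ)) (by simp)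
  have hχ1 : χ 0 = 1 := by
    simp only [χ]
    rw [χ0.one_of_mem_closedBall (by simp [χ0])]; simp
  have hχz : ∀ v, 1 ≤ ‖v‖ → χ v = 0 := fun v hv => by
    simp only [χ]
    rw [χ0.zero_of_le_dist (by simpa [χ0] using hv)]; simp
  let X := hχc.toSchwartzMap hχs
  have hX : (X : Rd d → ℂ) = χ := rfl
  refine ⟨𝓕⁻ χ, ?_, ?_⟩
  · let G : SchwartzMap (Rd d) ℂ := 𝓕⁻ X
    have hG : (G : Rd d → ℂ) = 𝓕⁻ χ := SchwartzMap.fourierInv_coe X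
    refine ⟨2 ^ (d + 1) * ((Finset.Iic ((d + 1), 0)).sup fun m => SchwartzMap.seminorm ℝ m.1 m.2) G, by positivity, fun y => ?_⟩
    have := SchwartzMap.one_add_le_sup_seminorm_apply (𝕜 := ℝ) (m := (d + 1, 0)) (k := d + 1) (n := 0) le_rfl le_rfl G y
    rw [norm_iteratedFDeriv_zero, hG] at this
    rw [le_div_iff₀ (by positivity)]
    linarith
  · intro a b f ha hud hb x
    obtain ⟨e, he, hiso⟩ := aux_iso _ hud x
    refine ⟨e, he, fun ε hε hεe => ?_⟩
    let ψ : Rd d → ℂ := fun v => χ (ε⁻¹ • (v - x))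
    have hψs : ContDiff ℝ ((⊤ : ℕ∞) : WithTop ℕ∞) ψ :=
      hχs.comp ((contDiff_id.sub contDiff_const).const_smul ε⁻¹)
    have hψz : ∀ v, ε ≤ dist v x → ψ v = 0 := by
      intro v hv
      apply hχz
      rw [norm_smul, norm_inv, Real.norm_of_nonneg hε.le, ← dist_eq_norm, inv_mul_eq_div, le_div_iff₀ hε]
      linarith
    have hψc : HasCompactSupport ψ := by
      refine HasCompactSupport.intro (isCompact_closedBall x ε) fun v hv => hψz v ?_
      rw [mem_closedBall, not_le] at hv
      exact hv.le
    let Ψ := hψc.toSchwartzMap hψs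
    have hΨ : (Ψ : Rd d → ℂ) = ψ := rfl
    have h1 : f Ψ = a x := by
      rw [ha.2.2, tsum_eq_single x]
      · rw [hΨ]; simp [ψ, hχ1]
      · intro y hy
        by_cases hay : a y = 0
        · simp [hay]
        · rw [hΨ, hψz y (hεe.le.trans (hiso y hay hy)), mul_zero]
    have h2 : fourierTD f (𝓕⁻ Ψ) = f Ψ := by
      simp [fourierTD]
    rw [← h1, ← h2, hb.2.2]
    congr 1
    funext γ
    rw [SchwartzMap.fourierInv_coe, hΨ, aux_four χ x ε hε γ]
    ring

open Submodule in
lemma aux_lat {d : ℕ} (H : AddSubgroup (Rd d)) (hH : DiscreteTopology H) :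
    ∃ L : Set (Rd d), IsFullRankLattice L ∧ (H : Set (Rd d)) ⊆ L := by
  let K : Submodule ℤ (Rd d) := AddSubgroup.toIntSubmodule H
  have hK : DiscreteTopology K := hH
  let F : Submodule ℝ (Rd d) := span ℝ (H : Set (Rd d))
  have hKF : K ≤ F.restrictScalars ℤ := fun x hx => subset_span hx
  let L : Submodule ℤ F := comap (F.restrictScalars ℤ).subtype K
  let f := Submodule.comapSubtypeEquivOfLe hKF
  have : DiscreteTopology L := by
    let e : K ≃L[ℤ] L :=
      ⟨f.symm, continuous_of_discreteTopology, Isometry.continuous fun _ ↦ congrFun rfl⟩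
    exact e.toHomeomorph.discreteTopology
  have : IsZLattice ℝ L := ⟨eq_top_iff.mpr <|
    span_span_coe_preimage.symm.le.trans (span_mono (Set.preimage_mono fun x hx => hx))⟩
  have : Module.Finite ℤ L := ZLattice.module_finite ℝ L
  have : Module.Free ℤ L := ZLattice.module_free ℝ L
  let b := Module.Free.chooseBasis ℤ L
  let bR := b.ofZLatticeBasis ℝ L
  have hli : LinearIndependent ℝ (F.subtype ∘ bR) :=
    bR.linearIndependent.map' F.subtype (Submodule.ker_subtype F)
  let B0 := Module.Basis.extend hli.linearIndepOn_id
  have : Finite (hli.linearIndepOn_id.extend (subset_univ _)) := Module.Finite.finite_basis B0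
  have := Fintype.ofFinite (hli.linearIndepOn_id.extend (subset_univ _))
  have hcard : Fintype.card (hli.linearIndepOn_id.extend (subset_univ _)) = Fintype.card (Fin d) := by
    rw [← Module.finrank_eq_card_basis B0]; simp
  let B := B0.reindex (Fintype.equivOfCardEq hcard)
  have hr : range (F.subtype ∘ bR) ⊆ range B := by
    simp only [B, Module.Basis.range_reindex, B0, Module.Basis.range_extend]
    exact hli.linearIndepOn_id.subset_extend (subset_univ _)
  have hHB : ∀ h ∈ H, h ∈ span ℤ (range B) := by
    intro h hh
    refine span_mono hr ?_
    have h1 : (⟨h, hKF hh⟩ : F) ∈ span ℤ (range bR) := by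
      rw [b.ofZLatticeBasis_span ℝ]; exact hh
    have h2 := Submodule.mem_map_of_mem (f := F.subtype.restrictScalars ℤ) h1
    rw [Submodule.map_span, ← range_comp] at h2
    exact h2
  let T := (EuclideanSpace.basisFun (Fin d) ℝ).toBasis.equiv B (Equiv.refl _)
  refine ⟨_, ⟨T.toLinearMap, T.bijective, rfl⟩, ?_⟩
  intro h hh
  refine ⟨T.symm h, ?_, by simp⟩
  intro i
  obtain ⟨n, hn⟩ := (B.mem_span_iff_repr_mem ℤ h).1 (hHB h hh) i
  refine ⟨n, ?_⟩
  have : B.repr h i = (T.symm h) i := by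
    have h3 : h = T (T.symm h) := by simp
    rw [h3]
    generalize T.symm h = w
    simp only [T, LinearEquiv.symm_apply_apply]
    simp [Module.Basis.equiv]
  rw [← this, ← hn]; simp

lemma aux_disc {d S : ℕ} (Λ : Fin S → Set (Rd d)) (hud : ∀ s, UniformlyDiscrete (Λ s))
    (H : AddSubgroup (Rd d))
    (hF : ∀ F : Finset (Rd d), (F : Set (Rd d)) ⊆ H → ∃ t, ∀ x ∈ F, ∃ s, x + t ∈ Λ s) :
    DiscreteTopology H := by
  classical
  choose η hη hd using hud
  obtain ⟨r, hr, hrη⟩ : ∃ r > 0, ∀ s, r ≤ η s := by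
    rcases isEmpty_or_nonempty (Fin S) with h | h
    · exact ⟨1, one_pos, fun s => (h.false s).elim⟩
    · obtain ⟨s0, hs0⟩ := Finite.exists_min η
      exact ⟨η s0, hη s0, hs0⟩
  have hfin : ((H : Set (Rd d)) ∩ ball 0 (r / 2)).Finite := by
    by_contra hinf
    obtain ⟨F, hFs, hFc⟩ := (show Set.Infinite _ from hinf).exists_subset_card_eq (S + 1)
    obtain ⟨t, ht⟩ := hF F (hFs.trans inter_subset_left)
    have : Nonempty (Fin S) := by
      obtain ⟨x, hx⟩ := Finset.card_pos.1 (by omega : 0 < F.card)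
      exact ⟨(ht x hx).choose⟩
    choose! s hs using ht
    obtain ⟨x, hx, y, hy, hxy, he⟩ := Finset.exists_ne_map_eq_of_card_lt_of_maps_to
      (s := F) (t := (Finset.univ : Finset (Fin S))) (by simp [hFc]) (f := s) (by simp [MapsTo])
    have h1 := hd (s x) (x + t) (hs x hx) (y + t) (he ▸ hs y hy) (by simpa using hxy)
    rw [dist_add_right] at h1
    have h2 := (hFs hx).2
    have h3 := (hFs hy).2
    rw [mem_ball] at h2 h3
    have h4 := dist_triangle_right x y 0
    have := hrη (s x)
    linarith
  refine discreteTopology_of_isOpen_singleton_zero ?_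
  have hfin2 : ({x : H | (x : Rd d) ∈ ball 0 (r/2)} \ {0}).Finite := by
    refine Set.Finite.subset (hfin.preimage Subtype.val_injective.injOn) ?_
    rintro x ⟨hx, -⟩
    exact ⟨x.2, hx⟩
  have ho : IsOpen ({x : H | (x : Rd d) ∈ ball 0 (r/2)} ∩ ({x : H | (x : Rd d) ∈ ball 0 (r/2)} \ {0})ᶜ) :=
    (isOpen_ball.preimage continuous_subtype_val).inter hfin2.isClosed.isOpen_compl
  convert ho
  ext x
  simp only [mem_singleton_iff, mem_inter_iff, mem_ofPred_eq, mem_compl_iff, mem_sdiff, not_and, not_not]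
  constructor
  · rintro rfl
    simp; linarith
  · rintro ⟨h1, h2⟩
    exact h2 h1

/-- (First part of Theorem 9.) Let `μ_1, …, μ_S` be pure point
measures in `S*(ℝ^d)` with uniformly discrete supports, whose Fourier
transforms are pure point measures with `|μ̂_s|(B(0,r)) = O(r^d)`, and with
`inf_{λ} Σ_s |μ_s(λ)| > 0` over the union of the supports. Then each support is
contained in a finite union of translates of full-rank lattices. -/
theorem statement3 {d S : ℕ} (a : Fin S → Rd d → ℂ) (f : Fin S → TemperedDist d)
    (b : Fin S → Rd d → ℂ)
    (hrep : ∀ s, RepMeasure (a s) (f s))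
    (hud : ∀ s, UniformlyDiscrete {x | a s x ≠ 0})
    (hrepF : ∀ s, RepMeasure (b s) (fourierTD (f s)))
    (hvar : ∀ s, ∃ C r₀ : ℝ, ∀ r ≥ r₀, ballVar (b s) r ≤ ENNReal.ofReal (C * r ^ d))
    (hinf : ∃ ε > (0:ℝ), ∀ x : Rd d, (∃ s, a s x ≠ 0) → ε ≤ ∑ s, ‖a s x‖) :
    ∀ s, ∃ (J : ℕ) (L : Fin J → Set (Rd d)) (v : Fin J → Rd d),
      (∀ j, IsFullRankLattice (L j)) ∧
      {x | a s x ≠ 0} ⊆ ⋃ j, (fun y => v j + y) '' (L j) := by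
  classical
  obtain ⟨g, ⟨K, hK, hg⟩, han⟩ := aux_an (d := d)
  obtain ⟨c, hc, hgap⟩ := hinf
  choose Cv r0 hv using hvar
  choose B hB using fun s => aux_bound (b s) g K (Cv s) (r0 s) hK hg (hv s)
  obtain ⟨R, hR0, hR⟩ : ∃ R : ℝ, 0 < R ∧ ∀ s, r0 s ≤ R :=
    ⟨1 + ∑ s, |r0 s|, by positivity, fun s => by
      have := Finset.single_le_sum (f := fun s => |r0 s|) (fun i _ => abs_nonneg _) (Finset.mem_univ s)
      have := le_abs_self (r0 s)
      linarith⟩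
  let ε : ℕ → ℝ := fun n => (R + n)⁻¹
  have hε0 : ∀ n, 0 < ε n := fun n => by positivity
  have hεr : ∀ n s, r0 s ≤ (ε n)⁻¹ := fun n s => by
    simp only [ε, inv_inv]
    have : (0:ℝ) ≤ n := by positivity
    linarith [hR s]
  have hεt : Filter.Tendsto ε Filter.atTop (nhds 0) :=
    tendsto_inv_atTop_zero.comp
      (Filter.tendsto_atTop_add_const_left _ R tendsto_natCast_atTop_atTop)
  let β : ℕ → Fin S × Rd d → ℂ := fun n i => b i.1 i.2 * ((ε n : ℂ) ^ d * g (ε n • i.2))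
  have hβ : ∀ n, ∑' i, ‖β n i‖ₑ ≤ ENNReal.ofReal (∑ s, |B s|) := by
    intro n
    rw [ENNReal.tsum_prod', tsum_fintype, ENNReal.ofReal_sum_of_nonneg (fun i _ => abs_nonneg _)]
    refine Finset.sum_le_sum fun s _ => ?_
    exact (hB s (ε n) (hε0 n) (hεr n s)).trans (ENNReal.ofReal_le_ofReal (le_abs_self _))
  have hβs : ∀ n, Summable fun i => ‖β n i‖ := by
    intro n
    have h1 : ∑' i, ‖β n i‖ₑ ≠ ⊤ := ((hβ n).trans_lt ENNReal.ofReal_lt_top).ne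
    have := ENNReal.summable_toReal h1
    simpa using this
  have hβC : ∀ n, ∑' i, ‖β n i‖ ≤ ∑ s, |B s| := by
    intro n
    rw [← ENNReal.ofReal_le_ofReal_iff (by positivity),
      ENNReal.ofReal_tsum_of_nonneg (fun i => norm_nonneg _) (hβs n)]
    simpa using hβ n
  let M : Rd d → Fin S × Rd d → ℂ := fun x i => e2pi x i.2
  have hM : ∀ x i, ‖M x i‖ = 1 := by
    intro x i
    simp only [M, e2pi]
    rw [show ((2 * Real.pi : ℝ) : ℂ) * Complex.I * ((⟪x, i.2⟫ : ℝ) : ℂ)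
      = ((2 * Real.pi * ⟪x, i.2⟫ : ℝ) : ℂ) * Complex.I by push_cast; ring]
    exact Complex.norm_exp_ofReal_mul_I _
  have hMadd : ∀ x y i, M (x + y) i = M x i * M y i := by
    intro x y i
    simp only [M, e2pi]
    rw [← Complex.exp_add, inner_add_left]
    congr 1
    push_cast; ring
  let σ : Fin S → Fin S × Rd d → ℂ := fun s i => if i.1 = s then 1 else 0
  have hσ : ∀ s i, ‖σ s i‖ ≤ 1 := by
    intro s i
    simp only [σ]
    split_ifs <;> simp
  have hlim : ∀ s x, Filter.Tendsto (fun n => ∑' i, β n i * (M x i * σ s i)) Filter.atTop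
      (nhds (a s x)) := by
    intro s x
    obtain ⟨e, he, h⟩ := han (a s) (b s) (f s) (hrep s) (hud s) (hrepF s) x
    refine tendsto_const_nhds.congr' ?_
    filter_upwards [hεt.eventually_lt_const he] with n hn
    rw [h (ε n) (hε0 n) hn]
    have hinj : Function.Injective (fun γ : Rd d => (s, γ)) := fun _ _ h => (Prod.mk.inj h).2
    rw [← hinj.tsum_eq]
    · congr 1
      funext γ
      simp [β, M, σ]
    · rintro ⟨s', γ⟩ hi
      refine ⟨γ, ?_⟩
      have : s' = s := by
        by_contra hne
        exact hi (by simp [σ, hne])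
      rw [this]
  obtain ⟨𝓗, i1, i2, i3, U, ξ, ζ, h1, h2, h3, h4, h5⟩ :=
    gns_main β (∑ s, |B s|) hβs hβC M hM hMadd σ hσ a hlim
  have hne : ∀ s x, (inner ℂ (ζ s) (U x ξ) : ℂ) ≠ 0 ↔ a s x ≠ 0 := by
    intro s x
    rw [h5]; simp
  have hnn : ∀ s x, ‖(inner ℂ (ζ s) (U x ξ) : ℂ)‖ = ‖a s x‖ := by
    intro s x
    rw [h5]; simp
  obtain ⟨C, hC1, hC2⟩ := abs_main U h1 h2 h3 ξ ζ c hc (fun x hx => by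
      simp only [hnn]
      simp only [hne] at hx
      exact hgap x hx) h4
    (fun H => ∃ L : Set (Rd d), IsFullRankLattice L ∧ (H : Set (Rd d)) ⊆ L)
    (fun H hH => aux_lat H (aux_disc (fun s => {x | a s x ≠ 0}) hud H (fun F hF => by
      obtain ⟨t, ht⟩ := hH F hF
      refine ⟨t, fun x hx => ?_⟩
      obtain ⟨s, hs⟩ := ht x hx
      exact ⟨s, (hne _ _).1 hs⟩)))
  intro s
  have hC3 : ∀ A : C, ∃ (L : Set (Rd d)) (t : Rd d), IsFullRankLattice L ∧
      (A : Set (Rd d)) ⊆ (fun y => t + y) '' L := by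
    rintro ⟨A, hA⟩
    obtain ⟨H, t, ⟨L, hL, hHL⟩, rfl⟩ := hC1 A hA
    exact ⟨L, t, hL, fun x hx => ⟨x - t, hHL hx, by simp⟩⟩
  choose L v hL hv2 using hC3
  refine ⟨C.card, fun j => L (C.equivFin.symm j), fun j => v (C.equivFin.symm j),
    fun j => hL _, ?_⟩
  intro x hx
  obtain ⟨A, hA, hxA⟩ := hC2 (show ∃ s, _ from ⟨s, (hne s x).2 hx⟩)
  refine mem_iUnion.2 ⟨C.equivFin ⟨A, hA⟩, ?_⟩
  simp only [Equiv.symm_apply_apply]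
  exact hv2 ⟨A, hA⟩ hxA
end
end
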